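/- Let r ≥ 1, let G₀, G₁, …, G_{r-1} be groups with group isomorphisms eᵢ : Gᵢ ≃ G_{i+1} (indices modulo r), let Γ = G₀ × ⋯ × G_{r-1}, let Φ : Γ → Γ be the automorphism Φ(x₀, …, x_{r-1}) = (e_{r-1}(x_{r-1}), e₀(x₀), …, e_{r-2}(x_{r-2})), and let ψ = e_{r-1} ∘ ⋯ ∘ e₀ : G₀ → G₀. If ψ has infinitely many twisted conjugacy classes in G₀, then Φ has infinitely many twisted conjugacy classes in Γ. -/

import Mathlib

/-- `x` and `y` are `φ`-twisted conjugate: there is `g` with `y = g * x * φ(g)⁻¹`. -/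
def TwistedConj {Γ : Type*} [Group Γ] (φ : Γ ≃* Γ) (x y : Γ) : Prop :=
  ∃ g : Γ, y = g * x * (φ g)⁻¹

/-!
The norm `N x = x * Φ x * ⋯ * Φ^(r-1) x` satisfies `N (g * x * (Φ g)⁻¹) = g * N x * (Φ^r g)⁻¹`.
Since `Φ^r` acts on the coordinate `G₀` as `ψ`, the map `x ↦ (N x)₀` sends `Φ`-twisted classes of
`Γ` to `ψ`-twisted classes of `G₀`. It is onto: if `x` is supported at the coordinate `0`, then
`Φ^j x` is supported at the coordinate `j`, so that `(N x)₀ = x₀`. All that matters about the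
cyclic shift of the indices is that `0` is a periodic point of minimal period `r`.
-/

section TwistedNorm

/-- The norm `x * φ x * ⋯ * φ^(k-1) x` along `φ`, with the factors in this order. For an
endomorphism `φ` it is the first component of `(x, φ) ^ k` in the semidirect product of `M` with
its endomorphisms; `φ` is a bare function so that all types of homomorphisms can be used. -/
def twistedNorm {M : Type*} [Monoid M] (φ : M → M) (k : ℕ) (x : M) : M :=
  ((List.range k).map fun j => φ^[j] x).prod

theorem twistedNorm_succ {M : Type*} [Monoid M] (φ : M → M) (k : ℕ) (x : M) :
    twistedNorm φ (k + 1) x = twistedNorm φ k x * φ^[k] x :=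
  List.prod_range_succ _ _

theorem map_twistedNorm_eq_of_iterate_eq_one {M N : Type*} [Monoid M] [Monoid N] (p : M →* N)
    (φ : M → M) {k : ℕ} (hk : 0 < k) {x : M}
    (hx : ∀ j, 0 < j → j < k → p (φ^[j] x) = 1) : p (twistedNorm φ k x) = p x := by
  obtain ⟨m, rfl⟩ := Nat.exists_eq_add_one.mpr hk
  have tail_eq_one : ((List.range m).map fun j => p (φ^[j + 1] x)).prod = 1 := by
    refine List.prod_eq_one fun y hy => ?_
    obtain ⟨j, hj, rfl⟩ := List.mem_map.mp hy
    exact hx (j + 1) j.succ_pos (Nat.succ_lt_succ (List.mem_range.mp hj))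
  rw [twistedNorm, List.prod_range_succ', map_mul, map_list_prod, List.map_map]
  exact (congrArg (p x * ·) tail_eq_one).trans (mul_one _)

theorem twistedNorm_mul_mul_inv {Γ F : Type*} [Group Γ] [FunLike F Γ Γ] [MonoidHomClass F Γ Γ]
    (φ : F) (k : ℕ) (g x : Γ) :
    twistedNorm φ k (g * x * (φ g)⁻¹) = g * twistedNorm φ k x * ((⇑φ)^[k] g)⁻¹ := by
  induction k with
  | zero => simp [twistedNorm]
  | succ k ih =>
    rw [twistedNorm_succ, ih, twistedNorm_succ]
    simp only [iterate_map_mul, iterate_map_inv, Function.iterate_succ_apply]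
    group

end TwistedNorm

section Quotient

variable {Γ H : Type*} [Group Γ] [Group H] {φ : Γ ≃* Γ} {ψ : H ≃* H} {p : Γ →* H} {k : ℕ}

theorem TwistedConj.map_twistedNorm (hp : ∀ g, p ((⇑φ)^[k] g) = ψ (p g)) {x y : Γ}
    (hxy : TwistedConj φ x y) :
    TwistedConj ψ (p (twistedNorm φ k x)) (p (twistedNorm φ k y)) := by
  obtain ⟨g, rfl⟩ := hxy
  exact ⟨p g, by simp only [twistedNorm_mul_mul_inv, map_mul, map_inv, hp]⟩

theorem infinite_quot_twistedConj_of_surjective_twistedNorm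
    (hp : ∀ g, p ((⇑φ)^[k] g) = ψ (p g))
    (hsurj : Function.Surjective fun x => p (twistedNorm φ k x))
    [Infinite (Quot (TwistedConj ψ))] : Infinite (Quot (TwistedConj φ)) :=
  Infinite.of_surjective
    (Quot.map (fun x => p (twistedNorm φ k x)) fun _ _ => TwistedConj.map_twistedNorm hp)
    (Quot.map_surjective _ hsurj)

end Quotient

theorem minimalPeriod_add_right {A : Type*} [AddLeftCancelMonoid A] (a b : A) :
    Function.minimalPeriod (· + a) b = addOrderOf a := by
  refine Function.minimalPeriod_eq_minimalPeriod_iff.mpr fun k => ?_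
  rw [isPeriodicPt_add_iff_nsmul_eq_zero, Function.IsPeriodicPt, Function.IsFixedPt,
    add_right_iterate_apply, add_eq_left]

theorem minimalPeriod_fin_add_one {n : ℕ} (i : Fin (n + 1)) :
    Function.minimalPeriod (· + 1) i = n + 1 :=
  (minimalPeriod_add_right _ _).trans (ZMod.addOrderOf_one (n + 1))

section Pi

variable {ι : Type*} {G : ι → Type*} {σ : ι → ι}

theorem iterate_apply_iterate_eq_one [∀ i, Monoid (G i)] {e : ∀ i, G i →* G (σ i)}
    {Φ : (∀ i, G i) → ∀ i, G i} (hΦ : ∀ x i, Φ x (σ i) = e i (x i))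
    {x : ∀ i, G i} {i : ι} (hx : x i = 1) (j : ℕ) : Φ^[j] x (σ^[j] i) = 1 := by
  induction j with
  | zero => exact hx
  | succ j ih =>
    rw [Function.iterate_succ_apply', Function.iterate_succ_apply', hΦ, ih, map_one]

theorem iterate_mulSingle_apply_eq_one [DecidableEq ι] [∀ i, Monoid (G i)]
    {e : ∀ i, G i →* G (σ i)} {Φ : (∀ i, G i) → ∀ i, G i}
    (hΦ : ∀ x i, Φ x (σ i) = e i (x i)) {i : ι} (a : G i) {j : ℕ} (hj : 0 < j)
    (hj' : j < Function.minimalPeriod σ i) : Φ^[j] (Pi.mulSingle i a) i = 1 := by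
  set r := Function.minimalPeriod σ i
  have source_ne : σ^[r - j] i ≠ i :=
    Function.not_isPeriodicPt_of_pos_of_lt_minimalPeriod (by lia) (by lia)
  have iterate_source : σ^[j] (σ^[r - j] i) = i := by
    rw [← Function.iterate_add_apply, Nat.add_sub_cancel' hj'.le]
    exact Function.iterate_minimalPeriod
  have h := iterate_apply_iterate_eq_one hΦ (Pi.mulSingle_eq_of_ne source_ne a) j
  rwa [iterate_source] at h

theorem stmt6_general [∀ i, Group (G i)] (e : ∀ i, G i →* G (σ i))
    (Φ : (∀ i, G i) ≃* (∀ i, G i)) (hΦ : ∀ x i, Φ x (σ i) = e i (x i))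
    {i : ι} (hi : i ∈ Function.periodicPts σ) (ψ : G i ≃* G i)
    (hψ : ∀ x, (⇑Φ)^[Function.minimalPeriod σ i] x i = ψ (x i))
    [Infinite (Quot (TwistedConj ψ))] : Infinite (Quot (TwistedConj Φ)) := by
  classical
  refine infinite_quot_twistedConj_of_surjective_twistedNorm (p := Pi.evalMonoidHom G i) hψ
    fun a => ⟨Pi.mulSingle i a, ?_⟩
  calc Pi.evalMonoidHom G i (twistedNorm Φ _ (Pi.mulSingle i a))
      = Pi.evalMonoidHom G i (Pi.mulSingle i a) :=
        map_twistedNorm_eq_of_iterate_eq_one _ _ (Function.minimalPeriod_pos_of_mem_periodicPts hi)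
          fun _ => iterate_mulSingle_apply_eq_one hΦ a
    _ = a := Pi.mulSingle_eq_same i a

end Pi

/-- Let `r = n+1 ≥ 1`, let `G₀, …, G_{r-1}` be groups with isomorphisms
`eᵢ : Gᵢ ≃* G_{i+1}` (indices mod `r`), let `Γ = G₀ × ⋯ × G_{r-1}` and let `Φ` be the
automorphism with `Φ(x)_{i+1} = eᵢ(xᵢ)` (indices mod `r`), i.e.
`Φ(x₀, …, x_{r-1}) = (e_{r-1}(x_{r-1}), e₀(x₀), …, e_{r-2}(x_{r-2}))`.  Let
`ψ = e_{r-1} ∘ ⋯ ∘ e₀ : G₀ ≃* G₀` (characterized by `(Φ^[r] x) 0 = ψ (x 0)`).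
If `ψ` has infinitely many twisted conjugacy classes in `G₀`, then `Φ` has infinitely
many twisted conjugacy classes in `Γ`. -/
theorem stmt6 {n : ℕ} (G : Fin (n + 1) → Type*) [∀ i, Group (G i)]
    (e : ∀ i : Fin (n + 1), G i ≃* G (i + 1))
    (Φ : (∀ i, G i) ≃* (∀ i, G i))
    (hΦ : ∀ (x : ∀ i, G i) (i : Fin (n + 1)), Φ x (i + 1) = e i (x i))
    (ψ : G 0 ≃* G 0)
    (hψ : ∀ x : ∀ i, G i, (⇑Φ)^[n + 1] x 0 = ψ (x 0))
    (h : Infinite (Quot (TwistedConj ψ))) :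
    Infinite (Quot (TwistedConj Φ)) := by
  exact stmt6_general (fun i => (e i : G i →* G (i + 1))) Φ hΦ
    ((add_left_injective 1).mem_periodicPts 0) ψ (by rwa [minimalPeriod_fin_add_one])
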